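/- Let n ≥ 1 be an integer and t > 0. Then the Rips magnitude function of the geodesic cycle C_n^geo satisfies |tC_n^geo|_Rips = Σ_r (n/r)·(e^{−η_r·t} − e^{−η_{r,n}·t}) + e^{−η_n·t}, where the sum is over all odd divisors r of n with r ≠ n. -/

import Mathlib

open scoped BigOperators Real

/-- The Rips magnitude function of a finite subset `A` of a metric space:
`|tA|_Rips = Σ_{∅ ≠ B ⊆ A} (−1)^{#B−1} e^{−diam(B)·t}`. -/
noncomputable def ripsMag {Y : Type*} [MetricSpace Y] (A : Finset Y) (t : ℝ) : ℝ :=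
  ∑ B ∈ A.powerset.filter (fun B => B.Nonempty),
    (-1 : ℝ) ^ (B.card - 1) * Real.exp (-(Metric.diam (B : Set Y)) * t)


open scoped Classical in
/-- The geodesic cycle `C_n^geo`: `n` equally spaced points on the circle
`ℝ/2πℤ` of total arclength `2π`, with the geodesic metric
`d(i,j) = (2π/n)·min(|i−j|, n−|i−j|)`. -/
noncomputable def geoCycle (n : ℕ) : Finset (AddCircle (2 * π : ℝ)) :=
  (Finset.range n).image (fun k => ((2 * π * k / n : ℝ) : AddCircle (2 * π : ℝ)))

/-- `η_m = 2π ⌊m/2⌋ / m`, the diameter of `C_m^geo`. -/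
noncomputable def etaG (m : ℕ) : ℝ := 2 * π * ((m / 2 : ℕ) : ℝ) / (m : ℝ)

/-- `η_{m,n} = 2π (1/n + ⌊m/2⌋/m)`. -/
noncomputable def etaG2 (m n : ℕ) : ℝ :=
  2 * π * (1 / (n : ℝ) + ((m / 2 : ℕ) : ℝ) / (m : ℝ))

/-!
By Abel summation in the scale, `|tC_n|_Rips` is determined by the Euler characteristics of the
Vietoris–Rips complexes of the cycle `ℤ/nℤ` at the integer scales `k < ⌊n/2⌋`. These are computed by
a discrete Morse matching. Call `y ∈ A` a last point if it is the last point of `A` in some arc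
`[x, x + k]` with `x ∈ A`, and call a last point `p` a pivot if `p + k` is not a last point. Then
`p + k ∉ A`, so every point of `A` is within `k` of `p - 1`, and adding or removing `p - 1` changes
neither whether `A` is a face nor its last points; matching `A` with `A ∆ {p - 1}` cancels all faces
that have a pivot.

In a face without pivots the last points are stable under translation by `k`, so they contain a
residue class modulo `d = gcd(k, n)`. Comparing diameters forces `2k + d = n`, and then the face is
exactly that class. Hence the Euler characteristic is `d` (one class for each residue, each of odd
cardinality `r = n / d`) if `2k + d = n` and `0` otherwise. The first case says that `r` is an odd
divisor of `n` and `k = d ⌊r/2⌋`, so that `2πk/n = η_r`.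
-/

section EulerCharacteristic

open Finset
open scoped symmDiff

/-- The Euler characteristic of a finite family of nonempty finite sets, to be thought of as the
faces of a simplicial complex. The exponent `#A + 1` has the parity of `dim A = #A - 1`, without
the truncated subtraction. -/
def eulerChar {α : Type*} (K : Finset (Finset α)) : ℤ := ∑ A ∈ K, (-1) ^ (#A + 1)

theorem neg_one_pow_card_symmDiff_singleton {α R : Type*} [DecidableEq α] [Monoid R]
    [HasDistribNeg R] (A : Finset α) (b : α) : (-1 : R) ^ #(A ∆ {b}) = -(-1) ^ #A := by
  by_cases hb : b ∈ A
  · have hA : A ∆ {b} = A.erase b := by grind [mem_symmDiff]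
    rw [hA, ← card_erase_add_one hb, pow_succ, mul_neg_one, neg_neg]
  · have hA : A ∆ {b} = insert b A := by grind [mem_symmDiff]
    rw [hA, card_insert_of_notMem hb, pow_succ, mul_neg_one]

theorem eulerChar_eq_zero_of_symmDiff_mem {α : Type*} [DecidableEq α] {K : Finset (Finset α)}
    (b : Finset α → α) (hK : ∀ A ∈ K, A ∆ {b A} ∈ K) (hb : ∀ A ∈ K, b (A ∆ {b A}) = b A) :
    eulerChar K = 0 := by
  refine sum_involution (fun A _ => A ∆ {b A}) (fun A _ => ?_) (fun A _ _ => ?_) hK fun A hA => ?_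
  · rw [pow_succ, pow_succ, neg_one_pow_card_symmDiff_singleton]
    ring
  · simp
  · rw [hb A hA, symmDiff_symmDiff_cancel_right]

theorem eulerChar_filter_nonempty {α : Type*} [Fintype α] [Nonempty α] :
    eulerChar ({A | A.Nonempty} : Finset (Finset α)) = 1 := by
  classical
  have hsum : ∑ A : Finset α, (-1 : ℤ) ^ #A = 0 := by
    rw [← powerset_univ, sum_powerset_neg_one_pow_card_of_nonempty univ_nonempty]
  have hfilter : ({A | A.Nonempty} : Finset (Finset α)) = univ.erase ∅ := by
    ext A
    simp [nonempty_iff_ne_empty]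
  have herase := add_sum_erase univ (fun A : Finset α => (-1 : ℤ) ^ #A) (mem_univ ∅)
  simp only [eulerChar, hfilter, pow_succ, mul_neg_one, sum_neg_distrib]
  simp only [hsum, card_empty, pow_zero] at herase
  linarith

theorem sum_mul_pow_eq_sum_range_mul_sub {ι R : Type*} [Ring R] (s : Finset ι) (w : ι → R)
    (δ : ι → ℕ) {M : ℕ} (hδ : ∀ a ∈ s, δ a ≤ M) (q : R) :
    ∑ a ∈ s, w a * q ^ δ a =
      ∑ k ∈ range M, (∑ a ∈ s with δ a ≤ k, w a) * (q ^ k - q ^ (k + 1)) +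
        (∑ a ∈ s, w a) * q ^ M := by
  have telescope : ∀ a ∈ s,
      q ^ δ a = ∑ k ∈ range M, (if δ a ≤ k then q ^ k - q ^ (k + 1) else 0) + q ^ M := by
    intro a ha
    have hIco : {k ∈ range M | δ a ≤ k} = Ico (δ a) M := by grind
    rw [← sum_filter, hIco, sum_Ico_eq_sub _ (hδ a ha), sum_range_sub', sum_range_sub']
    abel
  calc ∑ a ∈ s, w a * q ^ δ a
      = ∑ a ∈ s, (∑ k ∈ range M, (if δ a ≤ k then w a * (q ^ k - q ^ (k + 1)) else 0) +
          w a * q ^ M) := sum_congr rfl fun a ha => by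
        rw [telescope a ha, mul_add, mul_sum]
        simp only [mul_ite, mul_zero]
    _ = _ := by
        rw [sum_add_distrib, sum_comm, ← sum_mul]
        simp only [← sum_filter, sum_mul]

end EulerCharacteristic

section DivisorSum

open Finset

variable {n k r : ℕ}

theorem div_gcd_eq_of_two_mul_add_gcd_eq [NeZero n] (h : 2 * k + Nat.gcd k n = n) :
    n / Nat.gcd k n = 2 * (k / Nat.gcd k n) + 1 := by
  have hd : 0 < Nat.gcd k n := Nat.gcd_pos_of_pos_right k (NeZero.pos n)
  refine Nat.div_eq_of_eq_mul_right hd ?_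
  rw [mul_add_one, mul_left_comm, Nat.mul_div_cancel' (Nat.gcd_dvd_left k n), h]

theorem gcd_mul_div_gcd_half [NeZero n] (h : 2 * k + Nat.gcd k n = n) :
    Nat.gcd k n * (n / Nat.gcd k n / 2) = k := by
  have hhalf : (2 * (k / Nat.gcd k n) + 1) / 2 = k / Nat.gcd k n := by omega
  rw [div_gcd_eq_of_two_mul_add_gcd_eq h, hhalf, Nat.mul_div_cancel' (Nat.gcd_dvd_left k n)]

theorem gcd_div_mul_half (h : r ∣ n) (hr : Odd r) :
    Nat.gcd (n / r * (r / 2)) n = n / r := by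
  obtain ⟨m, rfl⟩ := hr
  obtain ⟨d, rfl⟩ := h
  have hhalf : (2 * m + 1) / 2 = m := by omega
  have hcoprime : Nat.gcd m (2 * m + 1) = 1 := by simp
  rw [Nat.mul_div_cancel_left _ (by omega), hhalf, mul_comm (2 * m + 1), Nat.gcd_mul_left,
    hcoprime, mul_one]

theorem two_mul_div_mul_half_add_div (h : r ∣ n) (hr : Odd r) :
    2 * (n / r * (r / 2)) + n / r = n := by
  obtain ⟨m, rfl⟩ := hr
  have hhalf : (2 * m + 1) / 2 = m := by omega
  calc 2 * (n / (2 * m + 1) * ((2 * m + 1) / 2)) + n / (2 * m + 1)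
      = n / (2 * m + 1) * (2 * m + 1) := by rw [hhalf]; ring
    _ = n := Nat.div_mul_cancel h

theorem sum_filter_two_mul_add_gcd_eq {M : Type*} [AddCommMonoid M] (n : ℕ) [NeZero n]
    (f : ℕ → ℕ → M) :
    ∑ k ∈ range (n / 2) with 2 * k + Nat.gcd k n = n, f (Nat.gcd k n) k =
      ∑ r ∈ n.divisors with Odd r ∧ r ≠ n, f (n / r) (n / r * (r / 2)) := by
  refine (sum_nbij' (fun r => n / r * (r / 2)) (fun k => n / Nat.gcd k n) ?_ ?_ ?_ ?_ ?_).symm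
  · intro r hr
    obtain ⟨hrn, hodd, hne⟩ := by simpa only [mem_filter, Nat.mem_divisors] using hr
    have htwo := two_mul_div_mul_half_add_div hrn.1 hodd
    have hone : n / r ≠ 1 := fun h => hne (Nat.eq_of_dvd_of_div_eq_one hrn.1 h)
    have hpos : 0 < n / r := Nat.div_pos (Nat.le_of_dvd (NeZero.pos n) hrn.1) hodd.pos
    rw [mem_filter, mem_range, gcd_div_mul_half hrn.1 hodd]
    omega
  · intro k hk
    obtain ⟨hlt, heq⟩ := by simpa only [mem_filter, mem_range] using hk
    refine mem_filter.2 ⟨Nat.mem_divisors.2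
      ⟨Nat.div_dvd_of_dvd (Nat.gcd_dvd_right k n), NeZero.ne n⟩, ?_, fun h => ?_⟩
    · rw [div_gcd_eq_of_two_mul_add_gcd_eq heq]
      exact odd_two_mul_add_one _
    · have hgcd : Nat.gcd k n ≠ 1 := by omega
      exact hgcd (by simpa [NeZero.ne n] using Nat.div_eq_self.1 h)
  · intro r hr
    obtain ⟨hrn, hodd, -⟩ := by simpa only [mem_filter, Nat.mem_divisors] using hr
    rw [gcd_div_mul_half hrn.1 hodd, Nat.div_div_self hrn.1 hrn.2]
  · intro k hk
    rw [Nat.div_div_self (Nat.gcd_dvd_right k n) (NeZero.ne n),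
      gcd_mul_div_gcd_half (mem_filter.1 hk).2]
  · intro r hr
    obtain ⟨hrn, hodd, -⟩ := by simpa only [mem_filter, Nat.mem_divisors] using hr
    rw [gcd_div_mul_half hrn.1 hodd]

end DivisorSum

section Cycle

open Finset
open scoped symmDiff

variable {n k d : ℕ}

/-- The diameter of a set of vertices of the combinatorial cycle `ℤ/nℤ`, in which `x` and `y` are
at distance `|x - y| = min (x - y) (n - (x - y))`, computed with the least absolute residue. -/
def cycDiam (A : Finset (ZMod n)) : ℕ := (A ×ˢ A).sup fun p => (p.1 - p.2).valMinAbs.natAbs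

theorem natAbs_valMinAbs_sub_le_cycDiam {A : Finset (ZMod n)} {x y : ZMod n} (hx : x ∈ A)
    (hy : y ∈ A) : (x - y).valMinAbs.natAbs ≤ cycDiam A :=
  le_sup (f := fun p : ZMod n × ZMod n => (p.1 - p.2).valMinAbs.natAbs) (mk_mem_product hx hy)

theorem cycDiam_le {A : Finset (ZMod n)} (h : ∀ x ∈ A, ∀ y ∈ A, (x - y).valMinAbs.natAbs ≤ k) :
    cycDiam A ≤ k :=
  Finset.sup_le fun p hp => h p.1 (mem_product.1 hp).1 p.2 (mem_product.1 hp).2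

theorem cycDiam_mono {A B : Finset (ZMod n)} (h : A ⊆ B) : cycDiam A ≤ cycDiam B :=
  sup_mono (product_subset_product h h)

theorem cycDiam_insert_le {A : Finset (ZMod n)} {b : ZMod n} (hA : cycDiam A ≤ k)
    (hb : ∀ x ∈ A, (x - b).valMinAbs.natAbs ≤ k) : cycDiam (insert b A) ≤ k := by
  refine cycDiam_le fun x hx y hy => ?_
  rcases mem_insert.1 hx with rfl | hxA <;> rcases mem_insert.1 hy with rfl | hyA
  · simp
  · rw [← neg_sub, ZMod.natAbs_valMinAbs_neg]
    exact hb y hyA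
  · exact hb x hxA
  · exact (natAbs_valMinAbs_sub_le_cycDiam hxA hyA).trans hA

variable [NeZero n]

theorem cycDiam_le_half (A : Finset (ZMod n)) : cycDiam A ≤ n / 2 :=
  cycDiam_le fun _ _ _ _ => ZMod.natAbs_valMinAbs_le _

theorem val_sub_one_add_one {a : ZMod n} (ha : a ≠ 0) : (a - 1).val + 1 = a.val := by
  have hpos : 0 < a.val := ZMod.val_pos.2 ha
  have hone : (1 : ZMod n).val = 1 := ZMod.val_one'' (by have := a.val_lt; omega)
  rw [ZMod.val_sub (by omega), hone]
  omega

theorem val_add_val_neg {a : ZMod n} (ha : a ≠ 0) : a.val + (-a).val = n := by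
  have := a.val_lt
  rw [ZMod.neg_val, if_neg ha]
  omega

theorem natAbs_valMinAbs_le_iff {a : ZMod n} :
    a.valMinAbs.natAbs ≤ k ↔ a.val ≤ k ∨ (-a).val ≤ k := by
  by_cases ha : a = 0
  · simp [ha]
  · rw [ZMod.valMinAbs_natAbs_eq_min, min_le_iff, ZMod.neg_val, if_neg ha]

theorem val_sub_le_or_val_sub_le {A : Finset (ZMod n)} (hA : cycDiam A ≤ k) {x y : ZMod n}
    (hx : x ∈ A) (hy : y ∈ A) : (x - y).val ≤ k ∨ (y - x).val ≤ k := by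
  simpa only [neg_sub] using
    natAbs_valMinAbs_le_iff.1 ((natAbs_valMinAbs_sub_le_cycDiam hx hy).trans hA)

/-- The Vietoris–Rips complex of the cycle `ℤ/nℤ` at scale `k`, as the family of its faces. -/
def cycRips (n k : ℕ) [NeZero n] : Finset (Finset (ZMod n)) :=
  {A | A.Nonempty ∧ cycDiam A ≤ k}

theorem mem_cycRips {A : Finset (ZMod n)} : A ∈ cycRips n k ↔ A.Nonempty ∧ cycDiam A ≤ k := by
  simp [cycRips]

/-- The points of `A` that come last, going clockwise, among the points of `A` in some arc
`[x, x + k]` with `x ∈ A`. The clockwise distance from `x` to `y` is `(y - x).val`. -/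
def lastPoints (k : ℕ) (A : Finset (ZMod n)) : Finset (ZMod n) :=
  {y ∈ A | ∃ x ∈ A, (y - x).val ≤ k ∧ ∀ z ∈ A, (z - x).val ≤ k → (z - x).val ≤ (y - x).val}

theorem mem_lastPoints {A : Finset (ZMod n)} {y : ZMod n} :
    y ∈ lastPoints k A ↔ y ∈ A ∧ ∃ x ∈ A, (y - x).val ≤ k ∧
      ∀ z ∈ A, (z - x).val ≤ k → (z - x).val ≤ (y - x).val :=
  mem_filter

theorem lastPoints_subset (k : ℕ) (A : Finset (ZMod n)) : lastPoints k A ⊆ A :=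
  filter_subset _ _

theorem lastPoints_nonempty {A : Finset (ZMod n)} (hA : A.Nonempty) :
    (lastPoints k A).Nonempty := by
  obtain ⟨x, hx⟩ := hA
  obtain ⟨y, hy, hmax⟩ := exists_max_image {z ∈ A | (z - x).val ≤ k} (fun z => (z - x).val)
    ⟨x, mem_filter.2 ⟨hx, by simp⟩⟩
  obtain ⟨hyA, hyk⟩ := mem_filter.1 hy
  exact ⟨y, mem_lastPoints.2 ⟨hyA, x, hx, hyk, fun z hz hzk => hmax z (mem_filter.2 ⟨hz, hzk⟩)⟩⟩

theorem add_natCast_mem_lastPoints (hk : k < n) {A : Finset (ZMod n)} {p : ZMod n} (hp : p ∈ A)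
    (hpk : p + k ∈ A) : p + k ∈ lastPoints k A := by
  have hval : (p + k - p).val = k := by rw [add_sub_cancel_left, ZMod.val_cast_of_lt hk]
  exact mem_lastPoints.2 ⟨hpk, p, hp, hval.le, fun z _ hz => hz.trans hval.ge⟩

/-- The last points of `A` whose translate by `k` is not a last point. A face `A` without pivots
is a critical cell of the matching on the Rips complex at scale `k`. -/
def pivots (k : ℕ) (A : Finset (ZMod n)) : Finset (ZMod n) :=
  {p ∈ lastPoints k A | p + k ∉ lastPoints k A}

theorem mem_and_add_notMem_of_mem_pivots (hk : k < n) {A : Finset (ZMod n)} {p : ZMod n}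
    (hp : p ∈ pivots k A) : p ∈ A ∧ p + k ∉ A := by
  obtain ⟨hpL, hpk⟩ := mem_filter.1 hp
  have hpA := lastPoints_subset k A hpL
  exact ⟨hpA, fun h => hpk (add_natCast_mem_lastPoints hk hpA h)⟩

theorem val_sub_ne_of_add_notMem {A : Finset (ZMod n)} {p x : ZMod n} (hpk : p + k ∉ A)
    (hx : x ∈ A) : (x - p).val ≠ k := fun h =>
  hpk <| by rwa [← h, ZMod.natCast_zmod_val, add_sub_cancel]

theorem val_sub_sub_one {p x : ZMod n} (h : x ≠ p - 1) :
    (x - (p - 1)).val = (x - p).val + 1 := by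
  rw [← val_sub_one_add_one (sub_ne_zero.2 h)]
  congr 2
  ring

theorem val_sub_eq_val_sub_one_sub_add_one {p x : ZMod n} (h : p ≠ x) :
    (p - x).val = (p - 1 - x).val + 1 := by
  rw [← val_sub_one_add_one (sub_ne_zero.2 h), sub_right_comm]

theorem cycDiam_insert_sub_one_le {A : Finset (ZMod n)} (hA : cycDiam A ≤ k) {p : ZMod n}
    (hp : p ∈ A) (hpk : p + k ∉ A) : cycDiam (insert (p - 1) A) ≤ k := by
  refine cycDiam_insert_le hA fun x hx => natAbs_valMinAbs_le_iff.2 ?_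
  rw [neg_sub]
  rcases eq_or_ne x (p - 1) with rfl | hxb
  · simp
  rw [val_sub_sub_one hxb]
  have hne := val_sub_ne_of_add_notMem hpk hx
  rcases val_sub_le_or_val_sub_le hA hx hp with h | h
  · left; omega
  · rcases eq_or_ne p x with rfl | hpx
    · left
      simp only [sub_self, ZMod.val_zero] at hne ⊢
      omega
    · right
      have := val_sub_eq_val_sub_one_sub_add_one hpx
      omega

theorem val_sub_le_of_val_sub_one_sub_le (hk : 2 * k + 1 < n) {A : Finset (ZMod n)}
    (hA : cycDiam A ≤ k) {p x : ZMod n} (hp : p ∈ A) (hx : x ∈ A) (h : (p - 1 - x).val ≤ k) :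
    (p - x).val = (p - 1 - x).val + 1 ∧ (p - x).val ≤ k := by
  have hpx : p ≠ x := by
    rintro rfl
    have : Fact (1 < n) := ⟨by omega⟩
    rw [sub_sub_cancel_left, ZMod.neg_val, if_neg one_ne_zero, ZMod.val_one] at h
    omega
  have hsucc := val_sub_eq_val_sub_one_sub_add_one hpx
  have hneg := val_add_val_neg (sub_ne_zero.2 hpx)
  rw [neg_sub] at hneg
  have := val_sub_le_or_val_sub_le hA hp hx
  omega

theorem lastPoints_insert_sub_one (hk : 2 * k + 1 < n) {A : Finset (ZMod n)} (hA : cycDiam A ≤ k)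
    {p : ZMod n} (hp : p ∈ A) (hpk : p + k ∉ A) :
    lastPoints k (insert (p - 1) A) = lastPoints k A := by
  by_cases hb : p - 1 ∈ A
  · rw [insert_eq_of_mem hb]
  have val_sub_pred : ∀ z ∈ A, (z - (p - 1)).val = (z - p).val + 1 := fun z hz =>
    val_sub_sub_one fun h => hb (h ▸ hz)
  have val_ne : ∀ z ∈ A, (z - p).val ≠ k := fun z => val_sub_ne_of_add_notMem hpk
  have val_pred_sub : ∀ x ∈ A, (p - 1 - x).val ≤ k →
      (p - x).val = (p - 1 - x).val + 1 ∧ (p - x).val ≤ k := fun x =>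
    val_sub_le_of_val_sub_one_sub_le hk hA hp
  ext y
  simp only [mem_lastPoints, mem_insert, forall_eq_or_imp, exists_eq_or_imp]
  constructor
  · rintro ⟨rfl | hy, ⟨hyk, -, hmax⟩ | ⟨x, hx, hyk, -, hmax⟩⟩
    · have := hmax p hp
      have := val_sub_pred p hp
      have := val_ne p hp
      simp only [sub_self, ZMod.val_zero] at *
      omega
    · have := val_pred_sub x hx hyk
      have := hmax p hp
      omega
    · refine ⟨hy, p, hp, ?_, fun z hz hzk => ?_⟩
      · have := val_sub_pred y hy
        omega
      · have := hmax z hz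
        have := val_sub_pred y hy
        have := val_sub_pred z hz
        have := val_ne z hz
        omega
    · exact ⟨hy, x, hx, hyk, hmax⟩
  · rintro ⟨hy, x, hx, hyk, hmax⟩
    refine ⟨Or.inr hy, Or.inr ⟨x, hx, hyk, fun hbk => ?_, hmax⟩⟩
    have := val_pred_sub x hx hbk
    have := hmax p hp
    omega

theorem symmDiff_sub_one_mem_cycRips_and_lastPoints_eq (hk : 2 * k + 1 < n) {A : Finset (ZMod n)}
    (hA : cycDiam A ≤ k) {p : ZMod n} (hp : p ∈ A) (hpk : p + k ∉ A) :
    A ∆ {p - 1} ∈ cycRips n k ∧ lastPoints k (A ∆ {p - 1}) = lastPoints k A := by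
  by_cases hb : p - 1 ∈ A
  · have : Fact (1 < n) := ⟨by omega⟩
    have herase : A ∆ {p - 1} = A.erase (p - 1) := by grind [mem_symmDiff]
    have hsub := erase_subset (p - 1) A
    have hdiam := (cycDiam_mono hsub).trans hA
    have hpe : p ∈ A.erase (p - 1) := mem_erase.2 ⟨fun h => one_ne_zero (sub_eq_self.1 h.symm), hp⟩
    rw [herase]
    refine ⟨mem_cycRips.2 ⟨⟨p, hpe⟩, hdiam⟩, ?_⟩
    rw [← lastPoints_insert_sub_one hk hdiam hpe fun h => hpk (hsub h), insert_erase hb]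
  · have hinsert : A ∆ {p - 1} = insert (p - 1) A := by grind [mem_symmDiff]
    rw [hinsert]
    exact ⟨mem_cycRips.2 ⟨insert_nonempty _ _, cycDiam_insert_sub_one_le hA hp hpk⟩,
      lastPoints_insert_sub_one hk hA hp hpk⟩

theorem eulerChar_filter_pivots_nonempty (hk : 2 * k + 1 < n) :
    eulerChar {A ∈ cycRips n k | (pivots k A).Nonempty} = 0 := by
  choose! c hc using fun (S : Finset (ZMod n)) (hS : S.Nonempty) => hS
  have matched : ∀ A ∈ ({A ∈ cycRips n k | (pivots k A).Nonempty} : Finset _),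
      A ∆ {c (pivots k A) - 1} ∈ cycRips n k ∧
        pivots k (A ∆ {c (pivots k A) - 1}) = pivots k A := by
    intro A hA
    obtain ⟨hrips, hpiv⟩ := mem_filter.1 hA
    obtain ⟨hp, hpk⟩ := mem_and_add_notMem_of_mem_pivots (by omega) (hc _ hpiv)
    obtain ⟨hmem, hlast⟩ :=
      symmDiff_sub_one_mem_cycRips_and_lastPoints_eq hk (mem_cycRips.1 hrips).2 hp hpk
    exact ⟨hmem, by rw [pivots, hlast, pivots]⟩
  refine eulerChar_eq_zero_of_symmDiff_mem (fun A => c (pivots k A) - 1) (fun A hA => ?_)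
    fun A hA => by simp only [(matched A hA).2]
  rw [mem_filter, (matched A hA).2]
  exact ⟨(matched A hA).1, (mem_filter.1 hA).2⟩

/-- The residue class of `i` modulo a divisor `d` of `n`, as a set of vertices of `ℤ/nℤ`; it is a
copy of the cycle `ℤ/(n/d)ℤ` stretched by the factor `d`. -/
def residueClass (h : d ∣ n) (i : ZMod d) : Finset (ZMod n) := {x | ZMod.castHom h (ZMod d) x = i}

theorem mem_residueClass {h : d ∣ n} {i : ZMod d} {x : ZMod n} :
    x ∈ residueClass h i ↔ ZMod.castHom h (ZMod d) x = i := by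
  rw [residueClass, mem_filter_univ]

theorem residueClass_nonempty (h : d ∣ n) (i : ZMod d) : (residueClass h i).Nonempty := by
  obtain ⟨x, hx⟩ := ZMod.ringHom_surjective (ZMod.castHom h (ZMod d)) i
  exact ⟨x, mem_residueClass.2 hx⟩

theorem residueClass_injective (h : d ∣ n) : Function.Injective (residueClass h) := by
  intro i j hij
  obtain ⟨x, hx⟩ := residueClass_nonempty h i
  exact (mem_residueClass.1 hx).symm.trans (mem_residueClass.1 (hij ▸ hx))

theorem add_natCast_mem_residueClass {h : d ∣ n} {i : ZMod d} {x : ZMod n}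
    (hx : x ∈ residueClass h i) (hk : d ∣ k) : x + k ∈ residueClass h i := by
  rw [mem_residueClass, map_add, map_natCast, (ZMod.natCast_eq_zero_iff k d).2 hk, add_zero,
    mem_residueClass.1 hx]

theorem card_residueClass (h : d ∣ n) (i : ZMod d) : #(residueClass h i) = n / d := by
  have : NeZero d := ⟨by rintro rfl; exact NeZero.ne n (zero_dvd_iff.1 h)⟩
  have hcard : ∀ j, #(residueClass h j) = #(residueClass h i) := fun j => by
    obtain ⟨c, hc⟩ := ZMod.ringHom_surjective (ZMod.castHom h (ZMod d)) (i - j)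
    refine card_nbij' (· + c) (· - c) ?_ ?_ ?_ ?_ <;> intro x <;>
      simp +contextual [mem_residueClass, -ZMod.castHom_apply, hc]
  have hn : n = ∑ j : ZMod d, #(residueClass h j) := by
    simpa only [card_univ, ZMod.card, residueClass] using
      card_eq_sum_card_fiberwise (f := ZMod.castHom h (ZMod d)) (s := univ) (t := univ) (by simp)
  simp only [hcard, sum_const, card_univ, ZMod.card, smul_eq_mul] at hn
  conv_rhs => rw [hn]
  exact (Nat.mul_div_cancel_left _ (NeZero.pos d)).symm

theorem cycDiam_residueClass (h : d ∣ n) (i : ZMod d) :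
    cycDiam (residueClass h i) = d * (n / d / 2) := by
  apply le_antisymm
  · refine cycDiam_le fun x hx y hy => ?_
    have hdvd : d ∣ (x - y).valMinAbs.natAbs := by
      rw [← Int.natCast_dvd, ← ZMod.intCast_zmod_eq_zero_iff_dvd]
      rw [← map_intCast (ZMod.castHom h (ZMod d)), ZMod.coe_valMinAbs, map_sub,
        mem_residueClass.1 hx, mem_residueClass.1 hy, sub_self]
    obtain ⟨e, he⟩ := hdvd
    have hle := ZMod.natAbs_valMinAbs_le (x - y)
    rw [he] at hle ⊢
    refine Nat.mul_le_mul_left d ?_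
    rwa [Nat.div_div_eq_div_mul, mul_comm d 2, ← Nat.div_div_eq_div_mul,
      Nat.le_div_iff_mul_le (Nat.pos_of_dvd_of_pos h (NeZero.pos n)), mul_comm]
  · have hhalf : d * (n / d / 2) ≤ n / 2 := by
      rw [Nat.div_div_eq_div_mul, mul_comm d 2, ← Nat.div_div_eq_div_mul]
      exact Nat.mul_div_le _ _
    obtain ⟨x, hx⟩ := residueClass_nonempty h i
    have := natAbs_valMinAbs_sub_le_cycDiam
      (add_natCast_mem_residueClass hx (dvd_mul_right d (n / d / 2))) hx
    rwa [add_sub_cancel_left, ZMod.valMinAbs_natCast_of_le_half hhalf, Int.natAbs_natCast] at this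

theorem residueClass_gcd_subset {S : Finset (ZMod n)} (hS : ∀ s ∈ S, s + k ∈ S) {s : ZMod n}
    (hs : s ∈ S) :
    residueClass (Nat.gcd_dvd_right k n) (ZMod.castHom (Nat.gcd_dvd_right k n) _ s) ⊆ S := by
  have translate : ∀ j : ℕ, s + j * k ∈ S := fun j => by
    induction j with
    | zero => simpa using hs
    | succ j ih => simpa only [Nat.cast_succ, add_one_mul, add_assoc] using hS _ ih
  intro y hy
  obtain ⟨c, hc⟩ : Nat.gcd k n ∣ (y - s).val := by
    rw [← ZMod.natCast_eq_zero_iff, ← map_natCast (ZMod.castHom (Nat.gcd_dvd_right k n) _),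
      ZMod.natCast_zmod_val, map_sub, mem_residueClass.1 hy, sub_self]
  have bezout : ((Nat.gcd k n : ℕ) : ZMod n) = k * Nat.gcdA k n := by
    simpa using congrArg (Int.cast : ℤ → ZMod n) (Nat.gcd_eq_gcd_ab k n)
  have hy' : y = s + ((Nat.gcdA k n * c : ZMod n).val : ℕ) * k := by
    rw [ZMod.natCast_zmod_val, ← sub_eq_iff_eq_add', ← ZMod.natCast_zmod_val (y - s), hc,
      Nat.cast_mul, bezout]
    ring
  exact hy' ▸ translate _

theorem exists_residueClass_gcd_subset {A : Finset (ZMod n)} (hA : A.Nonempty)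
    (hpiv : pivots k A = ∅) : ∃ i, residueClass (Nat.gcd_dvd_right k n) i ⊆ A := by
  obtain ⟨s, hs⟩ := lastPoints_nonempty (k := k) hA
  exact ⟨_, (residueClass_gcd_subset (fun p hp => not_not.1 (filter_eq_empty_iff.1 hpiv hp))
    hs).trans (lastPoints_subset k A)⟩

theorem two_mul_add_gcd_eq_of_cycDiam_le (hk : 2 * k < n) {i : ZMod (Nat.gcd k n)}
    (h : cycDiam (residueClass (Nat.gcd_dvd_right k n) i) ≤ k) : 2 * k + Nat.gcd k n = n := by
  have hd : 0 < Nat.gcd k n := Nat.gcd_pos_of_pos_right k (NeZero.pos n)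
  rw [cycDiam_residueClass] at h
  obtain ⟨c, hc⟩ := Nat.gcd_dvd_left k n
  obtain ⟨r, hr⟩ := Nat.gcd_dvd_right k n
  generalize Nat.gcd k n = d at *
  subst hc hr
  rw [Nat.mul_div_cancel_left _ hd] at h
  have hrc : r / 2 ≤ c := Nat.le_of_mul_le_mul_left h hd
  have hcr : 2 * c < r := Nat.lt_of_mul_lt_mul_left (a := d) (by linarith)
  obtain rfl : r = 2 * c + 1 := by omega
  ring

/-- A point `x` outside the class would lie strictly between a point `y + k` of the class and the
next one `y + k + d`, hence at distance more than `k` from `y` both ways round. -/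
theorem eq_residueClass_of_subset (h : d ∣ n) (hdk : d ∣ k) (hn : 2 * k + d = n) {i : ZMod d}
    {A : Finset (ZMod n)} (hA : cycDiam A ≤ k) (hsub : residueClass h i ⊆ A) :
    A = residueClass h i := by
  have : NeZero d := ⟨by rintro rfl; exact NeZero.ne n (zero_dvd_iff.1 h)⟩
  refine (Subset.antisymm hsub fun x hx => ?_).symm
  by_contra hxi
  set e := (ZMod.castHom h (ZMod d) x - i).val with he
  have he0 : 0 < e := ZMod.val_pos.2 (sub_ne_zero.2 (mt mem_residueClass.2 hxi))
  have hed : e < d := ZMod.val_lt _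
  have hy : x - (e + k : ℕ) ∈ residueClass h i := by
    rw [mem_residueClass, map_sub, map_natCast, Nat.cast_add, he, ZMod.natCast_zmod_val,
      (ZMod.natCast_eq_zero_iff k d).2 hdk, add_zero, sub_sub_cancel]
  have hval : ((e + k : ℕ) : ZMod n).val = e + k := ZMod.val_cast_of_lt (by omega)
  have hneg : ((e + k : ℕ) : ZMod n).val + (-((e + k : ℕ) : ZMod n)).val = n :=
    val_add_val_neg (ZMod.val_pos.1 (by omega))
  have hdist := val_sub_le_or_val_sub_le hA hx (hsub hy)
  rw [sub_sub_cancel, sub_sub_cancel_left] at hdist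
  omega

theorem mem_cycRips_and_pivots_eq_empty_iff (hk : 2 * k < n) {A : Finset (ZMod n)} :
    A ∈ cycRips n k ∧ pivots k A = ∅ ↔
      2 * k + Nat.gcd k n = n ∧ ∃ i, residueClass (Nat.gcd_dvd_right k n) i = A := by
  rw [mem_cycRips]
  constructor
  · rintro ⟨⟨hne, hdiam⟩, hpiv⟩
    obtain ⟨i, hi⟩ := exists_residueClass_gcd_subset hne hpiv
    have hn := two_mul_add_gcd_eq_of_cycDiam_le hk ((cycDiam_mono hi).trans hdiam)
    exact ⟨hn, i, (eq_residueClass_of_subset _ (Nat.gcd_dvd_left k n) hn hdiam hi).symm⟩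
  · rintro ⟨hn, i, rfl⟩
    refine ⟨⟨residueClass_nonempty _ i, ?_⟩, filter_eq_empty_iff.2 fun p hp => not_not.2 ?_⟩
    · exact ((cycDiam_residueClass _ i).trans (gcd_mul_div_gcd_half hn)).le
    · exact add_natCast_mem_lastPoints (by omega) (lastPoints_subset k _ hp)
        (add_natCast_mem_residueClass (lastPoints_subset k _ hp) (Nat.gcd_dvd_left k n))

theorem eulerChar_cycRips (hk : 2 * k + 1 < n) :
    eulerChar (cycRips n k) = if 2 * k + Nat.gcd k n = n then (Nat.gcd k n : ℤ) else 0 := by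
  have critical : eulerChar (cycRips n k) = eulerChar {A ∈ cycRips n k | pivots k A = ∅} := by
    have hsplit := sum_filter_add_sum_filter_not (cycRips n k) (fun A => (pivots k A).Nonempty)
      (fun A => (-1 : ℤ) ^ (#A + 1))
    have hpivots := eulerChar_filter_pivots_nonempty hk
    rw [eulerChar] at hpivots
    rw [hpivots, zero_add] at hsplit
    simpa only [eulerChar, not_nonempty_iff_eq_empty] using hsplit.symm
  rw [critical]
  split_ifs with hn
  · have : NeZero (Nat.gcd k n) := ⟨(Nat.gcd_pos_of_pos_right k (NeZero.pos n)).ne'⟩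
    have hclasses : ({A ∈ cycRips n k | pivots k A = ∅} : Finset _) =
        univ.image (residueClass (Nat.gcd_dvd_right k n)) := by
      ext A
      rw [mem_filter, mem_cycRips_and_pivots_eq_empty_iff (by omega), mem_image_univ_iff_mem_range,
        Set.mem_range, and_iff_right hn]
    have hsign : ∀ i, (-1 : ℤ) ^ (#(residueClass (Nat.gcd_dvd_right k n) i) + 1) = 1 := fun i => by
      rw [card_residueClass, div_gcd_eq_of_two_mul_add_gcd_eq hn]
      exact Even.neg_one_pow ⟨k / Nat.gcd k n + 1, by ring⟩
    rw [hclasses, eulerChar, sum_image (residueClass_injective _).injOn]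
    simp only [hsign, sum_const, card_univ, ZMod.card, nsmul_eq_mul, mul_one]
  · have hempty : ({A ∈ cycRips n k | pivots k A = ∅} : Finset _) = ∅ := by
      ext A
      rw [mem_filter, mem_cycRips_and_pivots_eq_empty_iff (by omega)]
      simp [hn]
    rw [hempty, eulerChar, sum_empty]

end Cycle

section RipsPolynomial

open Finset

variable {R : Type*} [Ring R] (n : ℕ)

theorem sum_neg_one_pow_mul_pow_cycDiam_eq_sum_eulerChar [NeZero n] (q : R) :
    ∑ A : Finset (ZMod n) with A.Nonempty, (-1) ^ (#A + 1) * q ^ cycDiam A =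
      ∑ k ∈ range (n / 2), (eulerChar (cycRips n k) : R) * (q ^ k - q ^ (k + 1)) +
        q ^ (n / 2) := by
  have hcast : ∀ K : Finset (Finset (ZMod n)),
      ∑ A ∈ K, (-1 : R) ^ (#A + 1) = (eulerChar K : R) := fun K => by simp [eulerChar]
  rw [sum_mul_pow_eq_sum_range_mul_sub _ _ cycDiam (fun A _ => cycDiam_le_half A)]
  simp only [hcast, filter_filter, eulerChar_filter_nonempty, Int.cast_one, one_mul, cycRips]

theorem sum_neg_one_pow_mul_pow_cycDiam [NeZero n] (q : R) :
    ∑ A : Finset (ZMod n) with A.Nonempty, (-1) ^ (#A + 1) * q ^ cycDiam A =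
      ∑ r ∈ n.divisors with Odd r ∧ r ≠ n,
        ((n / r : ℕ) : R) * (q ^ (n / r * (r / 2)) - q ^ (n / r * (r / 2) + 1)) +
        q ^ (n / 2) := by
  rw [sum_neg_one_pow_mul_pow_cycDiam_eq_sum_eulerChar,
    ← sum_filter_two_mul_add_gcd_eq n fun d k => (d : R) * (q ^ k - q ^ (k + 1)), sum_filter]
  congr 1
  refine sum_congr rfl fun k hk => ?_
  rw [eulerChar_cycRips (by have := mem_range.1 hk; omega)]
  split_ifs <;> simp

end RipsPolynomial

section Geometry

open Finset

theorem ripsMag_map {α Y : Type*} [MetricSpace Y] (f : α ↪ Y) (s : Finset α) (t : ℝ) :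
    ripsMag (s.map f) t = ∑ A ∈ s.powerset with A.Nonempty,
      (-1) ^ (#A + 1) * Real.exp (-(Metric.diam (f '' A)) * t) := by
  classical
  have himage : (s.map f).powerset.filter Finset.Nonempty =
      (s.powerset.filter Finset.Nonempty).map (mapEmbedding f).toEmbedding := by
    rw [map_eq_image, powerset_image]
    ext B
    simp only [mem_filter, mem_image, mem_map]
    constructor
    · rintro ⟨⟨A, hA, rfl⟩, hne⟩
      exact ⟨A, ⟨hA, image_nonempty.1 hne⟩, map_eq_image f A⟩
    · rintro ⟨A, ⟨hA, hne⟩, rfl⟩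
      exact ⟨⟨A, hA, (map_eq_image f A).symm⟩, hne.map⟩
  rw [ripsMag, himage, sum_map]
  refine sum_congr rfl fun A hA => ?_
  have hpos : 0 < #A := card_pos.2 (mem_filter.1 hA).2
  have hexp : #A + 1 = #A - 1 + 2 := by omega
  rw [RelEmbedding.coe_toEmbedding, mapEmbedding_apply, card_map, coe_map, hexp, pow_add,
    neg_one_sq, mul_one]

/-- The embedding of the cycle `ℤ/nℤ` as `n` equally spaced points of the circle of length `p`. -/
noncomputable def zmodToAddCircle (p : ℝ) (n : ℕ) [NeZero n] : ZMod n →+ AddCircle p :=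
  ZMod.lift n ⟨zmultiplesHom (AddCircle p) ((p / n : ℝ) : AddCircle p), by
    rw [zmultiplesHom_apply, natCast_zsmul, ← AddCircle.coe_nsmul, nsmul_eq_mul,
      mul_div_cancel₀ _ (Nat.cast_ne_zero.2 (NeZero.ne n)), AddCircle.coe_period]⟩

variable {p : ℝ} {n : ℕ} [NeZero n]

theorem zmodToAddCircle_natCast (k : ℕ) :
    zmodToAddCircle p n k = ((k / n * p : ℝ) : AddCircle p) := by
  rw [← Int.cast_natCast, zmodToAddCircle, ZMod.lift_coe, zmultiplesHom_apply, natCast_zsmul,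
    ← AddCircle.coe_nsmul, nsmul_eq_mul, div_mul_eq_mul_div, mul_div_assoc]

theorem norm_zmodToAddCircle [Fact (0 < p)] (x : ZMod n) :
    ‖zmodToAddCircle p n x‖ = p / n * x.valMinAbs.natAbs := by
  rw [← ZMod.natCast_zmod_val x, zmodToAddCircle_natCast, AddCircle.norm_div_natCast,
    Nat.mod_eq_of_lt x.val_lt, ZMod.natCast_zmod_val, ZMod.valMinAbs_natAbs_eq_min]
  ring

theorem zmodToAddCircle_injective [Fact (0 < p)] : Function.Injective (zmodToAddCircle p n) := by
  refine (injective_iff_map_eq_zero _).2 fun x hx => ?_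
  have hnorm := norm_zmodToAddCircle (p := p) x
  rw [hx, norm_zero, zero_eq_mul] at hnorm
  have hp : p / n ≠ 0 := div_ne_zero (Fact.out (p := 0 < p)).ne' (Nat.cast_ne_zero.2 (NeZero.ne n))
  simpa [hp] using hnorm

theorem dist_zmodToAddCircle [Fact (0 < p)] (x y : ZMod n) :
    dist (zmodToAddCircle p n x) (zmodToAddCircle p n y) =
      p / n * (x - y).valMinAbs.natAbs := by
  rw [dist_eq_norm, ← map_sub, norm_zmodToAddCircle]

theorem diam_image_zmodToAddCircle [Fact (0 < p)] {A : Finset (ZMod n)} (hA : A.Nonempty) :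
    Metric.diam (zmodToAddCircle p n '' A) = p / n * cycDiam A := by
  have hp : 0 ≤ p / n := div_nonneg (Fact.out (p := 0 < p)).le n.cast_nonneg
  apply le_antisymm
  · refine Metric.diam_le_of_forall_dist_le (by positivity) ?_
    rintro _ ⟨x, hx, rfl⟩ _ ⟨y, hy, rfl⟩
    rw [dist_zmodToAddCircle]
    gcongr
    exact natAbs_valMinAbs_sub_le_cycDiam hx hy
  · obtain ⟨⟨x, y⟩, hxy, hmax⟩ := exists_mem_eq_sup (A ×ˢ A) (hA.product hA)
      fun q => (q.1 - q.2).valMinAbs.natAbs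
    obtain ⟨hx, hy⟩ := mem_product.1 hxy
    rw [cycDiam, hmax, ← dist_zmodToAddCircle]
    exact Metric.dist_le_diam_of_mem (A.finite_toSet.image _).isBounded
      (Set.mem_image_of_mem _ hx) (Set.mem_image_of_mem _ hy)

end Geometry

section GeoCycle

open Finset

variable {n r : ℕ} [NeZero n]

theorem geoCycle_eq_map [Fact (0 < 2 * π)] :
    geoCycle n = univ.map ⟨zmodToAddCircle (2 * π) n, zmodToAddCircle_injective⟩ := by
  have hpoint : ∀ k : ℕ, ((2 * π * k / n : ℝ) : AddCircle (2 * π)) = zmodToAddCircle (2 * π) n k :=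
    fun k => by rw [zmodToAddCircle_natCast, div_mul_eq_mul_div, mul_comm (k : ℝ)]
  ext z
  -- `geoCycle` is an image over `ℝ`, with `range n` coerced to `Finset ℝ` by the `Finset` monad.
  simp only [geoCycle, bind_def, pure_def, sup_singleton_apply, mem_image, mem_range,
    exists_exists_and_eq_and, hpoint, mem_map, mem_univ, true_and, Function.Embedding.coeFn_mk]
  constructor
  · rintro ⟨k, -, rfl⟩
    exact ⟨k, rfl⟩
  · rintro ⟨x, rfl⟩
    exact ⟨x.val, x.val_lt, by rw [ZMod.natCast_zmod_val]⟩

theorem ripsMag_geoCycle_eq_sum_pow_cycDiam (t : ℝ) :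
    ripsMag (geoCycle n) t = ∑ A : Finset (ZMod n) with A.Nonempty,
      (-1) ^ (#A + 1) * Real.exp (-(2 * π / n) * t) ^ cycDiam A := by
  have : Fact (0 < 2 * π) := ⟨Real.two_pi_pos⟩
  rw [geoCycle_eq_map, ripsMag_map, powerset_univ]
  refine sum_congr rfl fun A hA => ?_
  rw [Function.Embedding.coeFn_mk, diam_image_zmodToAddCircle (mem_filter.1 hA).2,
    ← Real.exp_nat_mul]
  congr 2
  ring

theorem etaG_eq_mul (h : r ∣ n) : etaG r = 2 * π / n * (n / r * (r / 2) : ℕ) := by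
  have hn : (n : ℝ) ≠ 0 := NeZero.ne _
  have hr : (r : ℝ) ≠ 0 := Nat.cast_ne_zero.2 (ne_zero_of_dvd_ne_zero (NeZero.ne n) h)
  rw [etaG, Nat.cast_mul, Nat.cast_div h hr]
  field_simp

theorem etaG2_eq_etaG_add (r n : ℕ) : etaG2 r n = etaG r + 2 * π / n := by
  rw [etaG2, etaG]
  ring

theorem exp_neg_etaG (h : r ∣ n) (t : ℝ) :
    Real.exp (-(etaG r) * t) = Real.exp (-(2 * π / n) * t) ^ (n / r * (r / 2)) := by
  rw [← Real.exp_nat_mul, etaG_eq_mul h]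
  congr 1
  ring

theorem exp_neg_etaG2 (h : r ∣ n) (t : ℝ) :
    Real.exp (-(etaG2 r n) * t) = Real.exp (-(2 * π / n) * t) ^ (n / r * (r / 2) + 1) := by
  rw [pow_succ, ← exp_neg_etaG h, ← Real.exp_add, etaG2_eq_etaG_add]
  congr 1
  ring

end GeoCycle

/-- for `n ≥ 1` and `t > 0`,
`|tC_n^geo|_Rips = Σ_{odd r ∣ n, r ≠ n} (n/r)(e^{−η_r t} − e^{−η_{r,n} t}) + e^{−η_n t}`. -/
theorem ripsMag_geoCycle (n : ℕ) (hn : 1 ≤ n) (t : ℝ) (ht : 0 < t) :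
    ripsMag (geoCycle n) t =
      (∑ r ∈ n.divisors.filter (fun r => Odd r ∧ r ≠ n),
        ((n / r : ℕ) : ℝ) * (Real.exp (-(etaG r) * t) - Real.exp (-(etaG2 r n) * t)))
      + Real.exp (-(etaG n) * t) := by
  have : NeZero n := ⟨by omega⟩
  rw [ripsMag_geoCycle_eq_sum_pow_cycDiam, sum_neg_one_pow_mul_pow_cycDiam]
  congr 1
  · refine Finset.sum_congr rfl fun r hr => ?_
    have hrn : r ∣ n := Nat.dvd_of_mem_divisors (Finset.mem_filter.1 hr).1
    rw [exp_neg_etaG hrn, exp_neg_etaG2 hrn]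
  · rw [exp_neg_etaG dvd_rfl, Nat.div_self hn, one_mul]
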